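/- (Energy stability for nonlocally harmonic functions.) Let $d \ge 1$, let $\Omega \subset \mathbb{R}^d$ be bounded and open, and let $\delta > 0$. Set $\Omega_\delta^c = \{y \in \mathbb{R}^d \setminus \Omega : \operatorname{dist}(y, \partial\Omega) < \delta\}$ and $\widehat\Omega_\delta = \Omega \cup \Omega_\delta^c$ (with the conventions $\operatorname{dist}(y,\emptyset)=\infty$, and that the suprema below over an empty set are $0$; these are relevant only if $\Omega=\emptyset$). Let $\gamma : \widehat\Omega_\delta \times \widehat\Omega_\delta \to [0,\infty)$ be measurable and symmetric ($\gamma(x,y) = \gamma(y,x)$) with $G := \sup_{x\in\widehat\Omega_\delta} \int_{\widehat\Omega_\delta} \gamma(x,y)\,dy < \infty$. Let $w : \widehat\Omega_\delta \to \mathbb{R}$ be bounded and measurable with $\int_{\widehat\Omega_\delta} (w(y) - w(x))\,\gamma(x,y)\,dy = 0$ for every $x \in \Omega$. Then the function $(x,y)\mapsto (w(y)-w(x))^2\gamma(x,y)$ is integrable on $\widehat\Omega_\delta\times\widehat\Omega_\delta$ and $$\int_{\widehat\Omega_\delta}\int_{\widehat\Omega_\delta} (w(y) - w(x))^2\, \gamma(x,y)\,dy\,dx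 \;\le\; 2\, |\Omega_\delta^c| \cdot \Big(\sup_{x\in\Omega_\delta^c} |w(x)|\Big) \cdot \Big(\sup_{x\in\widehat\Omega_\delta} |w(x)| + \sup_{x\in\Omega_\delta^c} |w(x)|\Big) \cdot G,$$ where $|\Omega_\delta^c|$ is the Lebesgue measure of $\Omega_\delta^c$. -/

import Mathlib

open MeasureTheory

/-- The interaction domain `Ω_δ^c`: the points outside `Ω` whose distance to `∂Ω` is less than `δ`.
The distance is the extended one, so that the distance to an empty set is `∞`. -/
def omegaC {d : ℕ} (Ω : Set (EuclideanSpace ℝ (Fin d))) (δ : ℝ) :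
    Set (EuclideanSpace ℝ (Fin d)) :=
  {y | y ∉ Ω ∧ Metric.infEDist y (frontier Ω) < ENNReal.ofReal δ}

/-- `Ω̂_δ = Ω ∪ Ω_δ^c`. -/
def omegaHat {d : ℕ} (Ω : Set (EuclideanSpace ℝ (Fin d))) (δ : ℝ) :
    Set (EuclideanSpace ℝ (Fin d)) :=
  Ω ∪ omegaC Ω δ

/-- `G(γ) = sup_{x ∈ Ω̂_δ} ∫_{Ω̂_δ} γ(x,y) dy`, as an extended nonnegative number
(`γ` is nonnegative on `Ω̂_δ × Ω̂_δ` wherever this is used). -/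
noncomputable def kernelMass {d : ℕ} (Ω : Set (EuclideanSpace ℝ (Fin d))) (δ : ℝ)
    (γ : EuclideanSpace ℝ (Fin d) → EuclideanSpace ℝ (Fin d) → ℝ) : ENNReal :=
  ⨆ x ∈ omegaHat Ω δ, ∫⁻ y in omegaHat Ω δ, ENNReal.ofReal (γ x y)

/-! Symmetrizing the double integral gives the nonlocal Green identity
`∬ (w y - w x)² γ(x, y) = -2 ∫ w · ℒw`, where `ℒw x = ∫ (w y - w x) γ(x, y) dy`. Harmonicity
restricts the right-hand side to `Ω_δ^c`, where `|w| ≤ T := sup_{Ω_δ^c} |w|` and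
`|ℒw| ≤ (sup_{Ω̂_δ} |w| + T) G`. -/

open Set
open scoped ENNReal NNReal

section Nonlocal

variable {X : Type*} [MeasurableSpace X]

/-- The nonlocal Laplacian `ℒw x = ∫ (w y - w x) γ(x, y) dμ(y)` with kernel `γ`. The domain of
interaction is encoded in `μ`, which is typically a restricted measure. -/
noncomputable def nonlocalLaplacian (μ : Measure X) (γ : X → X → ℝ) (w : X → ℝ) (x : X) : ℝ :=
  ∫ y, (w y - w x) * γ x y ∂μ

/-- The nonlocal energy of `w`, without the customary factor `1 / 2`. -/
noncomputable def nonlocalEnergy (μ : Measure X) (γ : X → X → ℝ) (w : X → ℝ) : ℝ :=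
  ∫ x, ∫ y, (w y - w x) ^ 2 * γ x y ∂μ ∂μ

/-- The largest mass `sup_{x ∈ s} ∫_s |γ(x, y)| dμ(y)` of a row of a kernel of arbitrary sign. It
differs from `kernelMass`, where negative values of the kernel count as `0`. -/
noncomputable def maxRowMass (μ : Measure X) (s : Set X) (γ : X → X → ℝ) : ℝ≥0∞ :=
  ⨆ x ∈ s, ∫⁻ y in s, ‖γ x y‖ₑ ∂μ

lemma integrable_uncurry_of_lintegral_enorm_le {Y E : Type*} [MeasurableSpace Y]
    [NormedAddCommGroup E] {μ : Measure X} [IsFiniteMeasure μ] {ν : Measure Y} [SFinite ν]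
    {k : X → Y → E} {G : ℝ≥0∞} (hk : AEStronglyMeasurable (Function.uncurry k) (μ.prod ν))
    (hG : ∀ᵐ x ∂μ, ∫⁻ y, ‖k x y‖ₑ ∂ν ≤ G) (hG_top : G ≠ ∞) :
    Integrable (Function.uncurry k) (μ.prod ν) := by
  refine ⟨hk, ?_⟩
  calc ∫⁻ p, ‖Function.uncurry k p‖ₑ ∂μ.prod ν
      = ∫⁻ x, ∫⁻ y, ‖k x y‖ₑ ∂ν ∂μ := lintegral_prod _ hk.enorm
    _ ≤ ∫⁻ _, G ∂μ := lintegral_mono_ae hG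
    _ = G * μ univ := lintegral_const G
    _ < ∞ := ENNReal.mul_lt_top hG_top.lt_top (measure_lt_top μ univ)

variable {μ : Measure X} {γ : X → X → ℝ} {w : X → ℝ}

lemma integrable_mul_sub_mul_of_bounded [SFinite μ] {S : ℝ}
    (hγ : Integrable (Function.uncurry γ) (μ.prod μ)) (hw : AEMeasurable w μ)
    (hS : ∀ᵐ x ∂μ, |w x| ≤ S) :
    Integrable (fun p : X × X => w p.1 * (w p.2 - w p.1) * γ p.1 p.2) (μ.prod μ) := by
  have hw_fst : AEMeasurable (fun p : X × X => w p.1) (μ.prod μ) := hw.comp_fst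
  have hw_snd : AEMeasurable (fun p : X × X => w p.2) (μ.prod μ) := hw.comp_snd
  refine hγ.bdd_mul (c := S * (S + S)) (hw_fst.mul (hw_snd.sub hw_fst)).aestronglyMeasurable ?_
  filter_upwards [Measure.quasiMeasurePreserving_fst.ae hS,
    Measure.quasiMeasurePreserving_snd.ae hS] with p h_fst h_snd
  have h_sub : |w p.2 - w p.1| ≤ S + S := (abs_sub _ _).trans (add_le_add h_snd h_fst)
  rw [Real.norm_eq_abs, abs_mul]
  exact mul_le_mul h_fst h_sub (abs_nonneg _) ((abs_nonneg _).trans h_fst)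

lemma sq_sub_mul_ae_eq_neg_add_swap (hsymm : ∀ᵐ p ∂μ.prod μ, γ p.1 p.2 = γ p.2 p.1) :
    (fun p : X × X => (w p.2 - w p.1) ^ 2 * γ p.1 p.2) =ᵐ[μ.prod μ] fun p =>
      -(w p.1 * (w p.2 - w p.1) * γ p.1 p.2 + w p.2 * (w p.1 - w p.2) * γ p.2 p.1) := by
  filter_upwards [hsymm] with p hp
  rw [← hp]
  ring

lemma integrable_sq_sub_mul [SFinite μ]
    (hsymm : ∀ᵐ p ∂μ.prod μ, γ p.1 p.2 = γ p.2 p.1)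
    (hint : Integrable (fun p : X × X => w p.1 * (w p.2 - w p.1) * γ p.1 p.2) (μ.prod μ)) :
    Integrable (fun p : X × X => (w p.2 - w p.1) ^ 2 * γ p.1 p.2) (μ.prod μ) :=
  (hint.add hint.swap).neg.congr (sq_sub_mul_ae_eq_neg_add_swap hsymm).symm

theorem nonlocalEnergy_eq_neg_two_mul_integral [SFinite μ]
    (hsymm : ∀ᵐ p ∂μ.prod μ, γ p.1 p.2 = γ p.2 p.1)
    (hint : Integrable (fun p : X × X => w p.1 * (w p.2 - w p.1) * γ p.1 p.2) (μ.prod μ)) :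
    nonlocalEnergy μ γ w = -2 * ∫ x, w x * nonlocalLaplacian μ γ w x ∂μ := by
  set f : X × X → ℝ := fun p => w p.1 * (w p.2 - w p.1) * γ p.1 p.2 with hf
  have h_iterated : ∫ p, f p ∂μ.prod μ = ∫ x, w x * nonlocalLaplacian μ γ w x ∂μ := by
    rw [integral_prod f hint]
    simp only [hf, nonlocalLaplacian, mul_assoc, integral_const_mul]
  calc nonlocalEnergy μ γ w
      = ∫ p, (w p.2 - w p.1) ^ 2 * γ p.1 p.2 ∂μ.prod μ :=
        integral_integral (integrable_sq_sub_mul hsymm hint)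
    _ = ∫ p, -(f p + f p.swap) ∂μ.prod μ :=
        integral_congr_ae (sq_sub_mul_ae_eq_neg_add_swap hsymm)
    _ = -(∫ p, f p ∂μ.prod μ + ∫ p, f p.swap ∂μ.prod μ) := by
        rw [integral_neg]
        exact congrArg Neg.neg (integral_add hint hint.swap)
    _ = -2 * ∫ x, w x * nonlocalLaplacian μ γ w x ∂μ := by
        rw [integral_prod_swap f, h_iterated]
        ring

lemma enorm_nonlocalLaplacian_le {S : ℝ≥0} {x : X} (hS : ∀ᵐ y ∂μ, ‖w y‖ₑ ≤ S) :
    ‖nonlocalLaplacian μ γ w x‖ₑ ≤ (S + ‖w x‖ₑ) * ∫⁻ y, ‖γ x y‖ₑ ∂μ := by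
  calc ‖nonlocalLaplacian μ γ w x‖ₑ
      ≤ ∫⁻ y, ‖(w y - w x) * γ x y‖ₑ ∂μ := enorm_integral_le_lintegral_enorm _
    _ ≤ ∫⁻ y, (S + ‖w x‖ₑ) * ‖γ x y‖ₑ ∂μ := by
        refine lintegral_mono_ae (hS.mono fun y hy => ?_)
        rw [enorm_mul]
        gcongr
        exact enorm_sub_le.trans (add_le_add_left hy _)
    _ = (S + ‖w x‖ₑ) * ∫⁻ y, ‖γ x y‖ₑ ∂μ :=
        lintegral_const_mul' _ _ (ENNReal.add_ne_top.2 ⟨ENNReal.coe_ne_top, enorm_ne_top⟩)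

lemma enorm_integral_mul_nonlocalLaplacian_le {C : Set X} {S : ℝ≥0} {T G : ℝ≥0∞}
    (hS : ∀ᵐ x ∂μ, ‖w x‖ₑ ≤ S) (hT : ∀ᵐ x ∂μ.restrict C, ‖w x‖ₑ ≤ T)
    (hG : ∀ᵐ x ∂μ, ∫⁻ y, ‖γ x y‖ₑ ∂μ ≤ G)
    (hharm : ∀ᵐ x ∂μ, x ∉ C → nonlocalLaplacian μ γ w x = 0) :
    ‖∫ x, w x * nonlocalLaplacian μ γ w x ∂μ‖ₑ ≤ T * ((S + T) * G) * μ C := by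
  have h_supp : ∀ᵐ x ∂μ, x ∉ C → w x * nonlocalLaplacian μ γ w x = 0 :=
    hharm.mono fun x hx hxC => by rw [hx hxC, mul_zero]
  rw [← setIntegral_eq_integral_of_ae_compl_eq_zero h_supp]
  calc ‖∫ x in C, w x * nonlocalLaplacian μ γ w x ∂μ‖ₑ
      ≤ ∫⁻ x in C, ‖w x * nonlocalLaplacian μ γ w x‖ₑ ∂μ := enorm_integral_le_lintegral_enorm _
    _ ≤ ∫⁻ _ in C, T * ((S + T) * G) ∂μ := by
        refine lintegral_mono_ae ?_
        filter_upwards [hT, ae_restrict_of_ae hG] with x hxT hxG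
        rw [enorm_mul]
        have h_lap := enorm_nonlocalLaplacian_le (γ := γ) (x := x) hS
        exact mul_le_mul' hxT (h_lap.trans (by gcongr))
    _ = T * ((S + T) * G) * μ C := setLIntegral_const C _

theorem enorm_nonlocalEnergy_le [SFinite μ] {C : Set X} {S : ℝ≥0} {T G : ℝ≥0∞}
    (hsymm : ∀ᵐ p ∂μ.prod μ, γ p.1 p.2 = γ p.2 p.1)
    (hint : Integrable (fun p : X × X => w p.1 * (w p.2 - w p.1) * γ p.1 p.2) (μ.prod μ))
    (hS : ∀ᵐ x ∂μ, ‖w x‖ₑ ≤ S) (hT : ∀ᵐ x ∂μ.restrict C, ‖w x‖ₑ ≤ T)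
    (hG : ∀ᵐ x ∂μ, ∫⁻ y, ‖γ x y‖ₑ ∂μ ≤ G)
    (hharm : ∀ᵐ x ∂μ, x ∉ C → nonlocalLaplacian μ γ w x = 0) :
    ‖nonlocalEnergy μ γ w‖ₑ ≤ 2 * μ C * T * (S + T) * G := by
  have h_two : ‖(-2 : ℝ)‖ₑ = 2 := by simp [Real.enorm_eq_ofReal_abs]
  calc ‖nonlocalEnergy μ γ w‖ₑ
      = 2 * ‖∫ x, w x * nonlocalLaplacian μ γ w x ∂μ‖ₑ := by
        rw [nonlocalEnergy_eq_neg_two_mul_integral hsymm hint, enorm_mul, h_two]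
    _ ≤ 2 * (T * ((S + T) * G) * μ C) := by
        gcongr
        exact enorm_integral_mul_nonlocalLaplacian_le hS hT hG hharm
    _ = 2 * μ C * T * (S + T) * G := by ring

theorem abs_nonlocalEnergy_le [SFinite μ] {C : Set X} {S T : ℝ≥0} {G : ℝ≥0∞} (hC : μ C ≠ ∞)
    (hsymm : ∀ᵐ p ∂μ.prod μ, γ p.1 p.2 = γ p.2 p.1)
    (hint : Integrable (fun p : X × X => w p.1 * (w p.2 - w p.1) * γ p.1 p.2) (μ.prod μ))
    (hS : ∀ᵐ x ∂μ, ‖w x‖ₑ ≤ S) (hT : ∀ᵐ x ∂μ.restrict C, ‖w x‖ₑ ≤ T)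
    (hG : ∀ᵐ x ∂μ, ∫⁻ y, ‖γ x y‖ₑ ∂μ ≤ G) (hG_top : G ≠ ∞)
    (hharm : ∀ᵐ x ∂μ, x ∉ C → nonlocalLaplacian μ γ w x = 0) :
    |nonlocalEnergy μ γ w| ≤ 2 * (μ C).toReal * T * (S + T) * G.toReal := by
  have h_top : 2 * μ C * T * (S + T) * G ≠ ∞ := by finiteness
  calc |nonlocalEnergy μ γ w|
      = ‖nonlocalEnergy μ γ w‖ₑ.toReal := by rw [toReal_enorm, Real.norm_eq_abs]
    _ ≤ (2 * μ C * T * (S + T) * G).toReal :=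
        ENNReal.toReal_mono h_top (enorm_nonlocalEnergy_le hsymm hint hS hT hG hharm)
    _ = 2 * (μ C).toReal * T * (S + T) * G.toReal := by simp [ENNReal.toReal_add]

lemma ae_restrict_lintegral_enorm_le_maxRowMass (μ : Measure X) (γ : X → X → ℝ) {s : Set X}
    (hs : MeasurableSet s) :
    ∀ᵐ x ∂μ.restrict s, ∫⁻ y in s, ‖γ x y‖ₑ ∂μ ≤ maxRowMass μ s γ :=
  ae_restrict_of_forall_mem hs fun x hx =>
    le_iSup₂ (f := fun x _ => ∫⁻ y in s, ‖γ x y‖ₑ ∂μ) x hx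

lemma enorm_le_toNNReal_iSup_norm {ι E : Type*} [SeminormedAddCommGroup E] {s : Set ι}
    {f : ι → E} (hf : ∃ M : ℝ, ∀ x ∈ s, ‖f x‖ ≤ M) {x : ι} (hx : x ∈ s) :
    ‖f x‖ₑ ≤ (⨆ y : s, ‖f y‖).toNNReal := by
  obtain ⟨M, hM⟩ := hf
  have hbdd : BddAbove (range fun y : s => ‖f y‖) := ⟨M, forall_mem_range.2 fun y => hM y y.2⟩
  rw [← ofReal_norm]
  exact ENNReal.ofReal_le_ofReal (le_ciSup hbdd ⟨x, hx⟩)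

theorem stmt9_general [SFinite μ] {Ω C : Set X} (hΩ : MeasurableSet Ω) (hC : MeasurableSet C)
    (hfin : μ (Ω ∪ C) ≠ ∞)
    (hγm : AEMeasurable (Function.uncurry γ) ((μ.prod μ).restrict ((Ω ∪ C) ×ˢ (Ω ∪ C))))
    (hγsymm : ∀ x ∈ Ω ∪ C, ∀ y ∈ Ω ∪ C, γ x y = γ y x)
    (hG : maxRowMass μ (Ω ∪ C) γ ≠ ∞)
    (hwm : AEMeasurable w (μ.restrict (Ω ∪ C)))
    (hwb : ∃ M : ℝ, ∀ x ∈ Ω ∪ C, |w x| ≤ M)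
    (hharm : ∀ x ∈ Ω, nonlocalLaplacian (μ.restrict (Ω ∪ C)) γ w x = 0) :
    IntegrableOn (fun p : X × X => (w p.2 - w p.1) ^ 2 * γ p.1 p.2)
      ((Ω ∪ C) ×ˢ (Ω ∪ C)) (μ.prod μ) ∧
    nonlocalEnergy (μ.restrict (Ω ∪ C)) γ w ≤
      2 * (μ C).toReal * (⨆ x : C, |w x|) *
        ((⨆ x : ↥(Ω ∪ C), |w x|) + ⨆ x : C, |w x|) * (maxRowMass μ (Ω ∪ C) γ).toReal := by
  have hH : MeasurableSet (Ω ∪ C) := hΩ.union hC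
  have : IsFiniteMeasure (μ.restrict (Ω ∪ C)) := isFiniteMeasure_restrict.2 hfin
  have hsymm : ∀ᵐ p ∂(μ.prod μ).restrict ((Ω ∪ C) ×ˢ (Ω ∪ C)), γ p.1 p.2 = γ p.2 p.1 :=
    ae_restrict_of_forall_mem (hH.prod hH) fun p hp => hγsymm _ hp.1 _ hp.2
  rw [← Measure.prod_restrict] at hγm hsymm
  have hmass := ae_restrict_lintegral_enorm_le_maxRowMass μ γ hH
  have hint : Integrable (fun p : X × X => w p.1 * (w p.2 - w p.1) * γ p.1 p.2)
      ((μ.restrict (Ω ∪ C)).prod (μ.restrict (Ω ∪ C))) := by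
    obtain ⟨M, hM⟩ := hwb
    exact integrable_mul_sub_mul_of_bounded
      (integrable_uncurry_of_lintegral_enorm_le hγm.aestronglyMeasurable hmass hG) hwm
      (ae_restrict_of_forall_mem hH hM)
  rw [IntegrableOn, ← Measure.prod_restrict]
  refine ⟨integrable_sq_sub_mul hsymm hint, ?_⟩
  have hwbC : ∃ M : ℝ, ∀ x ∈ C, |w x| ≤ M := hwb.imp fun _ hM x hx => hM x (.inr hx)
  have hbound := abs_nonlocalEnergy_le (measure_ne_top _ C) hsymm hint
    (ae_restrict_of_forall_mem hH fun x => enorm_le_toNNReal_iSup_norm hwb)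
    (ae_restrict_of_forall_mem hC fun x => enorm_le_toNNReal_iSup_norm hwbC)
    hmass hG (ae_restrict_of_forall_mem hH fun x hx hxC => hharm x (hx.resolve_right hxC))
  simp only [Real.norm_eq_abs, Real.coe_toNNReal _ (Real.iSup_nonneg fun _ => abs_nonneg _),
    Measure.restrict_eq_self μ (subset_union_right : C ⊆ Ω ∪ C)] at hbound
  exact (le_abs_self _).trans hbound

end Nonlocal

section Domain

variable {d : ℕ} {Ω : Set (EuclideanSpace ℝ (Fin d))}

lemma isBounded_omegaHat (hΩ : Bornology.IsBounded Ω) (δ : ℝ) :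
    Bornology.IsBounded (omegaHat Ω δ) :=
  have h_thick : Bornology.IsBounded (Metric.thickening δ (frontier Ω)) :=
    (hΩ.closure.subset frontier_subset_closure).thickening
  hΩ.union (h_thick.subset fun _ hy => hy.2)

lemma measurableSet_omegaC (hΩ : MeasurableSet Ω) (δ : ℝ) : MeasurableSet (omegaC Ω δ) :=
  hΩ.compl.inter (Metric.isOpen_thickening (δ := δ) (E := frontier Ω)).measurableSet

lemma kernelMass_eq_maxRowMass {δ : ℝ}
    {γ : EuclideanSpace ℝ (Fin d) → EuclideanSpace ℝ (Fin d) → ℝ} (hΩ : MeasurableSet Ω)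
    (hγ : ∀ x ∈ omegaHat Ω δ, ∀ y ∈ omegaHat Ω δ, 0 ≤ γ x y) :
    kernelMass Ω δ γ = maxRowMass volume (omegaHat Ω δ) γ :=
  biSup_congr fun x hx =>
    setLIntegral_congr_fun (hΩ.union (measurableSet_omegaC hΩ δ)) fun y hy =>
      (Real.enorm_of_nonneg (hγ x hx y hy)).symm

end Domain

/-- Energy stability for nonlocally harmonic functions. Only the values of `γ` on `Ω̂_δ × Ω̂_δ` and
of `w` on `Ω̂_δ` matter; `AEMeasurable` with respect to the restricted Lebesgue measure is Lebesgue
measurability there. The first part of the conclusion says that the energy integral is finite. -/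
theorem stmt9 (d : ℕ) (hd : 1 ≤ d) (Ω : Set (EuclideanSpace ℝ (Fin d)))
    (hΩb : Bornology.IsBounded Ω) (hΩo : IsOpen Ω) (δ : ℝ) (hδ : 0 < δ)
    (γ : EuclideanSpace ℝ (Fin d) → EuclideanSpace ℝ (Fin d) → ℝ)
    (hγm : AEMeasurable (Function.uncurry γ)
      (volume.restrict (omegaHat Ω δ ×ˢ omegaHat Ω δ)))
    (hγ0 : ∀ x ∈ omegaHat Ω δ, ∀ y ∈ omegaHat Ω δ, 0 ≤ γ x y)
    (hγsym : ∀ x ∈ omegaHat Ω δ, ∀ y ∈ omegaHat Ω δ, γ x y = γ y x)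
    (hG : kernelMass Ω δ γ < ⊤)
    (w : EuclideanSpace ℝ (Fin d) → ℝ)
    (hwm : AEMeasurable w (volume.restrict (omegaHat Ω δ)))
    (hwb : ∃ M : ℝ, ∀ x ∈ omegaHat Ω δ, |w x| ≤ M)
    (hharm : ∀ x ∈ Ω, ∫ y in omegaHat Ω δ, (w y - w x) * γ x y = 0) :
    IntegrableOn (fun p : EuclideanSpace ℝ (Fin d) × EuclideanSpace ℝ (Fin d) =>
        (w p.2 - w p.1) ^ 2 * γ p.1 p.2) (omegaHat Ω δ ×ˢ omegaHat Ω δ) ∧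
    ∫ x in omegaHat Ω δ, ∫ y in omegaHat Ω δ, (w y - w x) ^ 2 * γ x y ≤
      2 * (volume (omegaC Ω δ)).toReal *
        (⨆ x : omegaC Ω δ, |w x|) *
        ((⨆ x : omegaHat Ω δ, |w x|) + ⨆ x : omegaC Ω δ, |w x|) *
        (kernelMass Ω δ γ).toReal := by
  rw [kernelMass_eq_maxRowMass hΩo.measurableSet hγ0] at hG ⊢
  exact stmt9_general hΩo.measurableSet (measurableSet_omegaC hΩo.measurableSet δ)
    (isBounded_omegaHat hΩb δ).measure_lt_top.ne hγm hγsym hG.ne hwm hwb hharm
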